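/- arXiv:q-alg/9703003 — 2 statements merged into one kernel-verified Lean document; each statement's English description precedes it below -/
import Mathlib

section
/- Let $D$ be a division ring, $q$ a nonzero central element of $D$, and $n \ge 2$. Call a matrix $z = (z_{ij})_{1\le i,j\le n}$ over $D$ a quantum matrix (for the parameter $q$) if its entries satisfy the following relations $\mathcal{R}el_q$: (row relations) $z_{il} z_{ik} = q\, z_{ik} z_{il}$ for all $i$ and all $k<l$; (column relations) $z_{jk} z_{ik} = q\, z_{ik} z_{jk}$ for all $k$ and all $i<j$; (secondary diagonal relations) $z_{il} z_{jk} = z_{jk} z_{il}$ for all $i<j$ and $k<l$; (main diagonal relations) $z_{ik} z_{jl} - z_{jl} z_{ik} = (q^{-1}-q)\, z_{il} z_{jk}$ for all $i<j$ and $k<l$. Let $z$ be a quantum matrix over $D$ with $z_{11} \ne 0$. Define the row-reduced matrix $z'$ by $z'_{1j} = z_{1j}$ for all $j$, $z'_{i1} = 0$ for $i \ge 2$, and $z'_{ij} = z_{ij} - z_{i1} z_{11}^{-1} z_{1j}$ for $i,j \ge 2$. Then $z'$ is again a quantum matrix for the same parameter $q$: its entries satisfy all the relations $\mathcal{R}el_q$.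 -/
/-- The relations `Rel_q` of `M_q(n)` for an `n × n` matrix `z` over a division ring:
row, column, secondary diagonal and main diagonal relations. -/
def IsQuantumMatrix {D : Type*} [DivisionRing D] (q : D) {n : ℕ}
    (z : Matrix (Fin n) (Fin n) D) : Prop :=
  (∀ i k l : Fin n, k < l → z i l * z i k = q * (z i k * z i l)) ∧
  (∀ i j k : Fin n, i < j → z j k * z i k = q * (z i k * z j k)) ∧
  (∀ i j k l : Fin n, i < j → k < l → z i l * z j k = z j k * z i l) ∧
  (∀ i j k l : Fin n, i < j → k < l →
    z i k * z j l - z j l * z i k = (q⁻¹ - q) * (z i l * z j k))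

/-- The matrix obtained by clearing the first column below the pivot `z 0 0`:
the first row is kept, the other entries of the first column become `0`, and the entry
`(i, j)` with `i, j ≠ 0` becomes `z i j - z i 0 * (z 0 0)⁻¹ * z 0 j`. -/
def rowReduce {D : Type*} [DivisionRing D] {n : ℕ}
    (z : Matrix (Fin (n + 1)) (Fin (n + 1)) D) : Matrix (Fin (n + 1)) (Fin (n + 1)) D :=
  Matrix.of fun i j =>
    if i = 0 then z 0 j
    else if j = 0 then 0
    else z i j - z i 0 * (z 0 0)⁻¹ * z 0 j

/-!
Split `z = s + m`, where `m` is the rank-one matrix through the pivot and `s` is the Schur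
complement; the reduced matrix consists of the first row of `z` on top of `s`. The rows of `m`
satisfy the same relations with the first row of `z` as those of `z` do. These relations are linear
in the lower row, so the rows of `s = z - m` satisfy them too, and by transposition the columns of
`s` satisfy the corresponding relations with the first column of `z`. Hence every product of an
entry of `s` and an entry of `m` can be reordered, and the mixed products cancel from `Rel_q` for
`z = s + m`. Away from the pivot `m` itself satisfies `Rel_q`, so what remains is `Rel_q` for `s`.
-/

open scoped Matrix Ring

/-- The relations `Rel_q` for a possibly rectangular matrix over an algebra `R` over a commutative
ring `K`, with `q` a unit of `K`. Each relation is oriented so that the factor in the earlier row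
(in the same row: in the earlier column) moves to the left. Taking for `K` the center of `R` gives
the usual notion for an arbitrary ring `R`. -/
structure IsQuantumMatrixOver {K R ι κ : Type*} [CommRing K] [Ring R] [Algebra K R] [LT ι] [LT κ]
    (q : Kˣ) (z : Matrix ι κ R) : Prop where
  row : ∀ i {k l}, k < l → z i l * z i k = (q : K) • (z i k * z i l)
  col : ∀ {i j} k, i < j → z j k * z i k = (q : K) • (z i k * z j k)
  secondaryDiag : ∀ {i j k l}, i < j → k < l → z j k * z i l = z i l * z j k
  mainDiag : ∀ {i j k l}, i < j → k < l →
    z j l * z i k = z i k * z j l - (↑q⁻¹ - q : K) • (z i l * z j k)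

/-- The rank-one matrix `z i ⊥ * (z ⊥ ⊥)⁻¹ * z ⊥ k`, the part of `z` removed by elimination. When
the pivot `z ⊥ ⊥` is a unit it agrees with `z` in the row and the column of the pivot; otherwise
`Ring.inverse` makes it zero. -/
noncomputable def pivotMatrix {R ι κ : Type*} [Ring R] [Bot ι] [Bot κ] (z : Matrix ι κ R) :
    Matrix ι κ R :=
  Matrix.of fun i k => z i ⊥ * ((z ⊥ ⊥)⁻¹ʳ * z ⊥ k)

/-- The Schur complement of the pivot `z ⊥ ⊥`, kept at full size: when the pivot is a unit, the row
and the column through it are zero. -/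
noncomputable def schurMatrix {R ι κ : Type*} [Ring R] [Bot ι] [Bot κ] (z : Matrix ι κ R) :
    Matrix ι κ R :=
  z - pivotMatrix z

section Pivot

variable {R ι κ : Type*} [Ring R] [Bot ι] [Bot κ] {z : Matrix ι κ R}

theorem pivotMatrix_apply (i : ι) (k : κ) :
    pivotMatrix z i k = z i ⊥ * ((z ⊥ ⊥)⁻¹ʳ * z ⊥ k) := rfl

theorem schurMatrix_apply (i : ι) (k : κ) : schurMatrix z i k = z i k - pivotMatrix z i k := rfl

theorem schurMatrix_bot_left (ha : IsUnit (z ⊥ ⊥)) (k : κ) : schurMatrix z ⊥ k = 0 := by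
  rw [schurMatrix_apply, pivotMatrix_apply, Ring.mul_inverse_cancel_left _ _ ha, sub_self]

theorem schurMatrix_bot_right (ha : IsUnit (z ⊥ ⊥)) (i : ι) : schurMatrix z i ⊥ = 0 := by
  rw [schurMatrix_apply, pivotMatrix_apply, Ring.inverse_mul_cancel _ ha, mul_one, sub_self]

end Pivot

theorem ringInverse_mul_of_mul_eq_smul {M R : Type*} [MonoidWithZero R] [SMul M R]
    [IsScalarTower M R R] [SMulCommClass M R R] {c : M} {a x : R} (ha : IsUnit a)
    (h : x * a = c • (a * x)) : a⁻¹ʳ * x = c • (x * a⁻¹ʳ) := by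
  calc a⁻¹ʳ * x = a⁻¹ʳ * (x * a) * a⁻¹ʳ := by
        rw [mul_assoc, Ring.mul_inverse_cancel_right _ _ ha]
    _ = c • (x * a⁻¹ʳ) := by
        rw [h, mul_smul_comm, Ring.inverse_mul_cancel_left _ _ ha, smul_mul_assoc]

theorem isQuantumMatrix_iff_isQuantumMatrixOver {D : Type*} [DivisionRing D]
    (q : (Subring.center D)ˣ) {n : ℕ} (z : Matrix (Fin n) (Fin n) D) :
    IsQuantumMatrix (q : D) z ↔ IsQuantumMatrixOver q z := by
  have smul_eq (x : D) : (↑q⁻¹ - q : Subring.center D) • x = ((q : D)⁻¹ - q) * x := by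
    simp [Subring.smul_def]
  constructor
  · rintro ⟨row, col, secondary, main⟩
    refine ⟨fun i k l => row i k l, fun k => col _ _ k,
      fun hij hkl => (secondary _ _ _ _ hij hkl).symm, fun hij hkl => ?_⟩
    rw [smul_eq, ← main _ _ _ _ hij hkl, sub_sub_cancel]
  · rintro ⟨row, col, secondary, main⟩
    refine ⟨fun i _ _ => row i, fun _ _ k => col k,
      fun _ _ _ _ hij hkl => (secondary hij hkl).symm, fun _ _ _ _ hij hkl => ?_⟩
    rw [← smul_eq, main hij hkl, sub_sub_cancel]

namespace IsQuantumMatrixOver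

variable {K R ι κ : Type*} [CommRing K] [Ring R] [Algebra K R] {q : Kˣ} {z : Matrix ι κ R}

theorem transpose [LT ι] [LT κ] (h : IsQuantumMatrixOver q z) : IsQuantumMatrixOver q zᵀ where
  row i _ _ hkl := h.col i hkl
  col k hij := h.row k hij
  secondaryDiag hij hkl := (h.secondaryDiag hkl hij).symm
  mainDiag hij hkl := by
    simpa only [Matrix.transpose_apply, h.secondaryDiag hkl hij] using h.mainDiag hkl hij

variable [PartialOrder ι] [OrderBot ι] [PartialOrder κ] [OrderBot κ] {i j : ι} {k l : κ}

theorem ringInverse_mul_left (h : IsQuantumMatrixOver q z) (ha : IsUnit (z ⊥ ⊥)) (hj : ⊥ < j) :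
    (z ⊥ ⊥)⁻¹ʳ * z j ⊥ = (q : K) • (z j ⊥ * (z ⊥ ⊥)⁻¹ʳ) :=
  ringInverse_mul_of_mul_eq_smul ha (h.col ⊥ hj)

theorem pivotMatrix_apply_eq_smul (h : IsQuantumMatrixOver q z) (ha : IsUnit (z ⊥ ⊥)) (hj : ⊥ < j)
    (k : κ) : pivotMatrix z j k = (q : K) • (z ⊥ k * (z j ⊥ * (z ⊥ ⊥)⁻¹ʳ)) := by
  rw [pivotMatrix_apply]
  obtain rfl | hk := eq_bot_or_bot_lt k
  · rw [Ring.inverse_mul_cancel _ ha, mul_one, ← mul_assoc, ← smul_mul_assoc, ← h.col ⊥ hj,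
      Ring.mul_inverse_cancel_right _ _ ha]
  · rw [ringInverse_mul_of_mul_eq_smul ha (h.row ⊥ hk), mul_smul_comm, ← mul_assoc,
      h.secondaryDiag hj hk, mul_assoc]

theorem pivotMatrix_transpose (h : IsQuantumMatrixOver q z) (ha : IsUnit (z ⊥ ⊥)) :
    pivotMatrix zᵀ = (pivotMatrix z)ᵀ := by
  ext k i
  simp only [Matrix.transpose_apply]
  obtain rfl | hi := eq_bot_or_bot_lt i
  · simp only [pivotMatrix_apply, Matrix.transpose_apply, Ring.mul_inverse_cancel_left _ _ ha,
      Ring.inverse_mul_cancel _ ha, mul_one]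
  · rw [h.pivotMatrix_apply_eq_smul ha hi, pivotMatrix_apply, ← mul_smul_comm]
    exact congrArg _ (h.ringInverse_mul_left ha hi)

theorem schurMatrix_transpose (h : IsQuantumMatrixOver q z) (ha : IsUnit (z ⊥ ⊥)) :
    schurMatrix zᵀ = (schurMatrix z)ᵀ := by
  rw [schurMatrix, h.pivotMatrix_transpose ha, schurMatrix, Matrix.transpose_sub]

theorem pivotMatrix_mul_top (h : IsQuantumMatrixOver q z) (ha : IsUnit (z ⊥ ⊥)) (hj : ⊥ < j)
    (k l : κ) : pivotMatrix z j l * z ⊥ k = (q : K) • (z ⊥ l * pivotMatrix z j k) := by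
  rw [h.pivotMatrix_apply_eq_smul ha hj l, smul_mul_assoc, pivotMatrix_apply, mul_assoc, mul_assoc]

theorem top_mul_pivotMatrix (h : IsQuantumMatrixOver q z) (ha : IsUnit (z ⊥ ⊥)) (hj : ⊥ < j)
    (hkl : k < l) : z ⊥ l * pivotMatrix z j k = (q : K) • (z ⊥ k * pivotMatrix z j l) := by
  rw [← q.isUnit.smul_left_cancel, ← h.pivotMatrix_mul_top ha hj, ← h.pivotMatrix_mul_top ha hj]
  simp only [pivotMatrix_apply, mul_assoc, h.row ⊥ hkl, mul_smul_comm]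

theorem pivotMatrix_mul_pivotMatrix (h : IsQuantumMatrixOver q z) (ha : IsUnit (z ⊥ ⊥))
    (i : ι) (hj : ⊥ < j) (k l : κ) :
    pivotMatrix z i k * pivotMatrix z j l =
      z i ⊥ * z j ⊥ * ((z ⊥ ⊥)⁻¹ʳ * (z ⊥ ⊥)⁻¹ʳ) * (z ⊥ k * z ⊥ l) := by
  rw [← q.isUnit.smul_left_cancel]
  calc (q : K) • (pivotMatrix z i k * pivotMatrix z j l)
      = z i ⊥ * (z ⊥ ⊥)⁻¹ʳ * ((q : K) • (z ⊥ k * (z j ⊥ * (z ⊥ ⊥)⁻¹ʳ))) * z ⊥ l := by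
        simp only [pivotMatrix_apply, mul_smul_comm, smul_mul_assoc, mul_assoc]
    _ = z i ⊥ * ((z ⊥ ⊥)⁻¹ʳ * z j ⊥) * (z ⊥ ⊥)⁻¹ʳ * (z ⊥ k * z ⊥ l) := by
        simp only [← h.pivotMatrix_apply_eq_smul ha hj, pivotMatrix_apply, mul_assoc]
    _ = (q : K) • (z i ⊥ * z j ⊥ * ((z ⊥ ⊥)⁻¹ʳ * (z ⊥ ⊥)⁻¹ʳ) * (z ⊥ k * z ⊥ l)) := by
        simp only [h.ringInverse_mul_left ha hj, mul_smul_comm, smul_mul_assoc, mul_assoc]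

theorem pivotMatrix_row (h : IsQuantumMatrixOver q z) (ha : IsUnit (z ⊥ ⊥)) (hi : ⊥ < i)
    (hkl : k < l) :
    pivotMatrix z i l * pivotMatrix z i k = (q : K) • (pivotMatrix z i k * pivotMatrix z i l) := by
  simp only [h.pivotMatrix_mul_pivotMatrix ha i hi, h.row ⊥ hkl, mul_smul_comm]

theorem pivotMatrix_secondaryDiag (h : IsQuantumMatrixOver q z) (ha : IsUnit (z ⊥ ⊥))
    (hi : ⊥ < i) (hij : i < j) (hkl : k < l) :
    pivotMatrix z j k * pivotMatrix z i l = pivotMatrix z i l * pivotMatrix z j k := by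
  simp only [h.pivotMatrix_mul_pivotMatrix ha _ hi,
    h.pivotMatrix_mul_pivotMatrix ha _ (hi.trans hij), h.col ⊥ hij, h.row ⊥ hkl, mul_smul_comm,
    smul_mul_assoc]

theorem pivotMatrix_mainDiag (h : IsQuantumMatrixOver q z) (ha : IsUnit (z ⊥ ⊥)) (hi : ⊥ < i)
    (hij : i < j) (hkl : k < l) :
    pivotMatrix z j l * pivotMatrix z i k = pivotMatrix z i k * pivotMatrix z j l -
      (↑q⁻¹ - q : K) • (pivotMatrix z i l * pivotMatrix z j k) := by
  simp only [h.pivotMatrix_mul_pivotMatrix ha _ hi,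
    h.pivotMatrix_mul_pivotMatrix ha _ (hi.trans hij), h.col ⊥ hij, h.row ⊥ hkl, mul_smul_comm,
    smul_mul_assoc, smul_smul, sub_mul, q.inv_mul]
  module

theorem schurMatrix_mul_top_self (h : IsQuantumMatrixOver q z) (ha : IsUnit (z ⊥ ⊥)) (j : ι)
    (k : κ) : schurMatrix z j k * z ⊥ k = (q : K) • (z ⊥ k * schurMatrix z j k) := by
  obtain rfl | hj := eq_bot_or_bot_lt j
  · simp [schurMatrix_bot_left ha]
  · rw [schurMatrix_apply, sub_mul, mul_sub, smul_sub, h.col k hj, h.pivotMatrix_mul_top ha hj]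

theorem schurMatrix_mul_top_of_lt (h : IsQuantumMatrixOver q z) (ha : IsUnit (z ⊥ ⊥)) (j : ι)
    (hkl : k < l) : schurMatrix z j k * z ⊥ l = z ⊥ l * schurMatrix z j k := by
  obtain rfl | hj := eq_bot_or_bot_lt j
  · simp [schurMatrix_bot_left ha]
  · rw [schurMatrix_apply, sub_mul, mul_sub, h.secondaryDiag hj hkl, h.pivotMatrix_mul_top ha hj,
      h.top_mul_pivotMatrix ha hj hkl]

theorem schurMatrix_mul_top_of_gt (h : IsQuantumMatrixOver q z) (ha : IsUnit (z ⊥ ⊥)) (j : ι)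
    (hkl : k < l) : schurMatrix z j l * z ⊥ k =
      z ⊥ k * schurMatrix z j l - (↑q⁻¹ - q : K) • (z ⊥ l * schurMatrix z j k) := by
  obtain rfl | hj := eq_bot_or_bot_lt j
  · simp [schurMatrix_bot_left ha]
  · simp only [schurMatrix_apply, sub_mul, mul_sub, h.mainDiag hj hkl, h.pivotMatrix_mul_top ha hj,
      h.top_mul_pivotMatrix ha hj hkl, smul_sub, smul_smul, q.inv_mul]
    module

theorem schurMatrix_mul_left_self (h : IsQuantumMatrixOver q z) (ha : IsUnit (z ⊥ ⊥)) (i : ι)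
    (k : κ) : schurMatrix z i k * z i ⊥ = (q : K) • (z i ⊥ * schurMatrix z i k) := by
  simpa [h.schurMatrix_transpose ha] using h.transpose.schurMatrix_mul_top_self ha k i

theorem schurMatrix_mul_left_of_lt (h : IsQuantumMatrixOver q z) (ha : IsUnit (z ⊥ ⊥))
    (hij : i < j) (k : κ) : schurMatrix z i k * z j ⊥ = z j ⊥ * schurMatrix z i k := by
  simpa [h.schurMatrix_transpose ha] using h.transpose.schurMatrix_mul_top_of_lt ha k hij

theorem schurMatrix_mul_left_of_gt (h : IsQuantumMatrixOver q z) (ha : IsUnit (z ⊥ ⊥))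
    (hij : i < j) (k : κ) : schurMatrix z j k * z i ⊥ =
      z i ⊥ * schurMatrix z j k - (↑q⁻¹ - q : K) • (z j ⊥ * schurMatrix z i k) := by
  simpa [h.schurMatrix_transpose ha] using h.transpose.schurMatrix_mul_top_of_gt ha k hij

theorem schurMatrix_mul_pivot (h : IsQuantumMatrixOver q z) (ha : IsUnit (z ⊥ ⊥)) (i : ι) (k : κ) :
    schurMatrix z i k * z ⊥ ⊥ = z ⊥ ⊥ * schurMatrix z i k := by
  obtain rfl | hk := eq_bot_or_bot_lt k
  · simp [schurMatrix_bot_right ha]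
  · simpa [schurMatrix_bot_right ha] using h.schurMatrix_mul_top_of_gt ha i hk

theorem schurMatrix_mul_ringInverse_mul (h : IsQuantumMatrixOver q z) (ha : IsUnit (z ⊥ ⊥))
    (i : ι) (k : κ) (x : R) :
    schurMatrix z i k * ((z ⊥ ⊥)⁻¹ʳ * x) = (z ⊥ ⊥)⁻¹ʳ * (schurMatrix z i k * x) := by
  have comm : (z ⊥ ⊥)⁻¹ʳ * schurMatrix z i k = (1 : K) • (schurMatrix z i k * (z ⊥ ⊥)⁻¹ʳ) :=
    ringInverse_mul_of_mul_eq_smul ha (by rw [h.schurMatrix_mul_pivot ha, one_smul])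
  rw [← mul_assoc, ← mul_assoc, comm, one_smul]

/-! The two suffixes compare the row index, then the column index, of the first factor with that of
the second. -/

theorem schurMatrix_mul_pivotMatrix_self_lt (h : IsQuantumMatrixOver q z) (ha : IsUnit (z ⊥ ⊥))
    (i : ι) (hkl : k < l) :
    schurMatrix z i k * pivotMatrix z i l = (q : K) • (pivotMatrix z i l * schurMatrix z i k) := by
  simp only [pivotMatrix_apply, ← mul_assoc _ (z _ ⊥), h.schurMatrix_mul_left_self ha,
    h.schurMatrix_mul_top_of_lt ha _ hkl, h.schurMatrix_mul_ringInverse_mul ha, smul_mul_assoc,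
    mul_assoc]

theorem schurMatrix_mul_pivotMatrix_self_gt (h : IsQuantumMatrixOver q z) (ha : IsUnit (z ⊥ ⊥))
    (i : ι) (hkl : k < l) :
    schurMatrix z i l * pivotMatrix z i k = (q : K) • (pivotMatrix z i k * schurMatrix z i l -
      (↑q⁻¹ - q : K) • (pivotMatrix z i l * schurMatrix z i k)) := by
  simp only [pivotMatrix_apply, ← mul_assoc _ (z _ ⊥), h.schurMatrix_mul_left_self ha,
    h.schurMatrix_mul_top_of_gt ha _ hkl, h.schurMatrix_mul_ringInverse_mul ha, mul_sub,
    smul_mul_assoc, mul_smul_comm, mul_assoc]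

theorem schurMatrix_mul_pivotMatrix_lt_lt (h : IsQuantumMatrixOver q z) (ha : IsUnit (z ⊥ ⊥))
    (hij : i < j) (hkl : k < l) :
    schurMatrix z i k * pivotMatrix z j l = pivotMatrix z j l * schurMatrix z i k := by
  simp only [pivotMatrix_apply, ← mul_assoc _ (z _ ⊥), h.schurMatrix_mul_left_of_lt ha hij,
    h.schurMatrix_mul_top_of_lt ha _ hkl, h.schurMatrix_mul_ringInverse_mul ha, mul_assoc]

theorem schurMatrix_mul_pivotMatrix_lt_gt (h : IsQuantumMatrixOver q z) (ha : IsUnit (z ⊥ ⊥))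
    (hij : i < j) (hkl : k < l) :
    schurMatrix z i l * pivotMatrix z j k = pivotMatrix z j k * schurMatrix z i l -
      (↑q⁻¹ - q : K) • (pivotMatrix z j l * schurMatrix z i k) := by
  simp only [pivotMatrix_apply, ← mul_assoc _ (z _ ⊥), h.schurMatrix_mul_left_of_lt ha hij,
    h.schurMatrix_mul_top_of_gt ha _ hkl, h.schurMatrix_mul_ringInverse_mul ha, mul_sub,
    mul_smul_comm, mul_assoc]

theorem schurMatrix_mul_pivotMatrix_gt_lt (h : IsQuantumMatrixOver q z) (ha : IsUnit (z ⊥ ⊥))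
    (hij : i < j) (hkl : k < l) :
    schurMatrix z j k * pivotMatrix z i l = pivotMatrix z i l * schurMatrix z j k -
      (↑q⁻¹ - q : K) • (pivotMatrix z j l * schurMatrix z i k) := by
  simp only [pivotMatrix_apply, ← mul_assoc _ (z _ ⊥), h.schurMatrix_mul_left_of_gt ha hij,
    h.schurMatrix_mul_top_of_lt ha _ hkl, h.schurMatrix_mul_ringInverse_mul ha, sub_mul,
    smul_mul_assoc, mul_assoc]

/-- The last product is not reordered because it cancels as it stands in the main diagonal
relation. -/
theorem schurMatrix_mul_pivotMatrix_gt_gt (h : IsQuantumMatrixOver q z) (ha : IsUnit (z ⊥ ⊥))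
    (hij : i < j) (hkl : k < l) :
    schurMatrix z j l * pivotMatrix z i k = pivotMatrix z i k * schurMatrix z j l -
      (↑q⁻¹ - q : K) • (pivotMatrix z i l * schurMatrix z j k) -
      (↑q⁻¹ - q : K) • (schurMatrix z i l * pivotMatrix z j k) := by
  simp only [pivotMatrix_apply, ← mul_assoc _ (z _ ⊥), h.schurMatrix_mul_left_of_gt ha hij,
    h.schurMatrix_mul_left_of_lt ha hij, h.schurMatrix_mul_top_of_gt ha _ hkl,
    h.schurMatrix_mul_ringInverse_mul ha, sub_mul, mul_sub, smul_mul_assoc, mul_smul_comm,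
    mul_assoc]

theorem schurMatrix_row (h : IsQuantumMatrixOver q z) (ha : IsUnit (z ⊥ ⊥)) (i : ι) (hkl : k < l) :
    schurMatrix z i l * schurMatrix z i k = (q : K) • (schurMatrix z i k * schurMatrix z i l) := by
  obtain rfl | hi := eq_bot_or_bot_lt i
  · simp [schurMatrix_bot_left ha]
  have cross : schurMatrix z i l * pivotMatrix z i k + pivotMatrix z i l * schurMatrix z i k =
      (q : K) • (schurMatrix z i k * pivotMatrix z i l +
        pivotMatrix z i k * schurMatrix z i l) := by
    rw [h.schurMatrix_mul_pivotMatrix_self_gt ha i hkl,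
      h.schurMatrix_mul_pivotMatrix_self_lt ha i hkl, smul_sub, smul_smul, mul_sub, q.mul_inv]
    module
  simp only [schurMatrix_apply, sub_mul, mul_sub] at cross ⊢
  linear_combination (norm := module) h.row i hkl - cross - h.pivotMatrix_row ha hi hkl

theorem schurMatrix_secondaryDiag (h : IsQuantumMatrixOver q z) (ha : IsUnit (z ⊥ ⊥))
    (hij : i < j) (hkl : k < l) :
    schurMatrix z j k * schurMatrix z i l = schurMatrix z i l * schurMatrix z j k := by
  obtain rfl | hi := eq_bot_or_bot_lt i
  · simp [schurMatrix_bot_left ha]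
  have cross : schurMatrix z j k * pivotMatrix z i l + pivotMatrix z j k * schurMatrix z i l =
      schurMatrix z i l * pivotMatrix z j k + pivotMatrix z i l * schurMatrix z j k := by
    rw [h.schurMatrix_mul_pivotMatrix_gt_lt ha hij hkl,
      h.schurMatrix_mul_pivotMatrix_lt_gt ha hij hkl]
    module
  simp only [schurMatrix_apply, sub_mul, mul_sub] at cross ⊢
  linear_combination (norm := module)
    h.secondaryDiag hij hkl - cross - h.pivotMatrix_secondaryDiag ha hi hij hkl

theorem schurMatrix_mainDiag (h : IsQuantumMatrixOver q z) (ha : IsUnit (z ⊥ ⊥))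
    (hij : i < j) (hkl : k < l) :
    schurMatrix z j l * schurMatrix z i k = schurMatrix z i k * schurMatrix z j l -
      (↑q⁻¹ - q : K) • (schurMatrix z i l * schurMatrix z j k) := by
  obtain rfl | hi := eq_bot_or_bot_lt i
  · simp [schurMatrix_bot_left ha]
  have cross : schurMatrix z j l * pivotMatrix z i k + pivotMatrix z j l * schurMatrix z i k =
      schurMatrix z i k * pivotMatrix z j l + pivotMatrix z i k * schurMatrix z j l -
        (↑q⁻¹ - q : K) • (schurMatrix z i l * pivotMatrix z j k +
          pivotMatrix z i l * schurMatrix z j k) := by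
    rw [h.schurMatrix_mul_pivotMatrix_gt_gt ha hij hkl,
      h.schurMatrix_mul_pivotMatrix_lt_lt ha hij hkl]
    module
  simp only [schurMatrix_apply, sub_mul, mul_sub] at cross ⊢
  linear_combination (norm := module)
    h.mainDiag hij hkl - cross - h.pivotMatrix_mainDiag ha hi hij hkl

theorem schurMatrix (h : IsQuantumMatrixOver q z) (ha : IsUnit (z ⊥ ⊥)) :
    IsQuantumMatrixOver q (schurMatrix z) where
  row i _ _ hkl := h.schurMatrix_row ha i hkl
  col k hij := by simpa [h.schurMatrix_transpose ha] using h.transpose.schurMatrix_row ha k hij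
  secondaryDiag hij hkl := h.schurMatrix_secondaryDiag ha hij hkl
  mainDiag hij hkl := h.schurMatrix_mainDiag ha hij hkl

end IsQuantumMatrixOver

theorem row_reducing_quantum_matrix_general {K R ι κ : Type*} [CommRing K] [Ring R] [Algebra K R]
    [PartialOrder ι] [OrderBot ι] [PartialOrder κ] [OrderBot κ] [DecidableEq ι] {q : Kˣ}
    {z : Matrix ι κ R} (h : IsQuantumMatrixOver q z) (ha : IsUnit (z ⊥ ⊥)) :
    IsQuantumMatrixOver q ((schurMatrix z).updateRow ⊥ (z ⊥)) := by
  have schur := h.schurMatrix ha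
  have row_of_bot_lt {i : ι} (hi : ⊥ < i) :
      (schurMatrix z).updateRow ⊥ (z ⊥) i = schurMatrix z i := Matrix.updateRow_ne hi.ne'
  refine ⟨fun i k l hkl => ?_, fun {i j} k hij => ?_, fun {i j k l} hij hkl => ?_,
    fun {i j k l} hij hkl => ?_⟩
  all_goals obtain rfl | hi := eq_bot_or_bot_lt i
  · simpa using h.row ⊥ hkl
  · simpa [row_of_bot_lt hi] using schur.row i hkl
  · simpa [row_of_bot_lt hij] using h.schurMatrix_mul_top_self ha j k
  · simpa [row_of_bot_lt hi, row_of_bot_lt (hi.trans hij)] using schur.col k hij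
  · simpa [row_of_bot_lt hij] using h.schurMatrix_mul_top_of_lt ha j hkl
  · simpa [row_of_bot_lt hi, row_of_bot_lt (hi.trans hij)] using schur.secondaryDiag hij hkl
  · simpa [row_of_bot_lt hij] using h.schurMatrix_mul_top_of_gt ha j hkl
  · simpa [row_of_bot_lt hi, row_of_bot_lt (hi.trans hij)] using schur.mainDiag hij hkl

theorem rowReduce_eq_updateRow_schurMatrix {D : Type*} [DivisionRing D] {n : ℕ}
    {z : Matrix (Fin (n + 1)) (Fin (n + 1)) D} (h11 : z 0 0 ≠ 0) :
    rowReduce z = (schurMatrix z).updateRow 0 (z 0) := by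
  ext i k
  obtain rfl | hi := eq_or_ne i 0
  · simp [rowReduce]
  obtain rfl | hk := eq_or_ne k 0
  · have column_cleared : schurMatrix z i 0 = 0 := schurMatrix_bot_right h11.isUnit i
    simp [rowReduce, hi, column_cleared]
  · simp [rowReduce, hi, hk, schurMatrix_apply, pivotMatrix_apply, mul_assoc, bot_eq_zero]

/-- Row-reducing a quantum matrix of size `n + 2 ≥ 2` over a division ring gives a quantum
matrix for the same parameter `q`. -/
theorem row_reducing_quantum_matrix {D : Type*} [DivisionRing D] (q : D)
    (hq : q ≠ 0) (hqc : q ∈ Subring.center D) (n : ℕ)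
    (z : Matrix (Fin (n + 2)) (Fin (n + 2)) D)
    (hz : IsQuantumMatrix q z) (h11 : z 0 0 ≠ 0) :
    IsQuantumMatrix q (rowReduce z) := by
  lift q to Subring.center D using hqc
  lift q to (Subring.center D)ˣ using IsUnit.mk0 q (by exact_mod_cast hq)
  rw [isQuantumMatrix_iff_isQuantumMatrixOver] at hz ⊢
  rw [rowReduce_eq_updateRow_schurMatrix h11]
  exact row_reducing_quantum_matrix_general hz h11.isUnit
end

section
/- Let $D$ be a division ring, $q$ a nonzero central element of $D$, and $n \ge 1$. Let $z = (z_{rs})_{1\le r,s\le n}$ be an $n\times n$ quantum matrix over $D$, i.e. a family of elements of $D$ such that, for all $i<j$ and $k<l$ (and all rows, respectively columns, in the first two relations): - (row relations) $z_{rl} z_{rk} = q\, z_{rk} z_{rl}$ for all $r$; - (column relations) $z_{js} z_{is} = q\, z_{is} z_{js}$ for all $s$; - (secondary diagonal relations) $z_{il} z_{jk} = z_{jk} z_{il}$; - (main diagonal relations) $z_{ik} z_{jl} - z_{jl} z_{ik} = (q^{-1}-q)\, z_{il} z_{jk}$. Assume $z_{11}\neq 0$ and let $1<i<j\le n$ and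 $1<k<l\le n$. Set $A = z_{ik} - z_{i1} z_{11}^{-1} z_{1k}$, $B = z_{il} - z_{i1} z_{11}^{-1} z_{1l}$, $C = z_{jk} - z_{j1} z_{11}^{-1} z_{1k}$, and $E = z_{jl} - z_{j1} z_{11}^{-1} z_{1l}$. Then $$AE - EA = (q^{-1}-q)\, BC.$$ (For $n=3$ this concerns $i=k=2$, $j=l=3$.) -/
/-- The entry `z'ᵢⱼ = zᵢⱼ - zᵢ₁ z₁₁⁻¹ z₁ⱼ` (with `i`, `j` not the first index, which is `0` in
`Fin (n + 1)`) of the matrix obtained from `z` by clearing the first column below `z₁₁`. -/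
def rowReducedEntry {D : Type*} [DivisionRing D] {n : ℕ}
    (z : Matrix (Fin (n + 1)) (Fin (n + 1)) D) (i j : Fin (n + 1)) : D :=
  z i j - z i 0 * (z 0 0)⁻¹ * z 0 j

/-!
Commuting with `z j l` is a derivation which, up to the central factor `q⁻¹ - q`, sends every entry
`z r s` with `r < j` and `s < l` to the product `z r l * z j s`. Applied to a Schur complement, such
a derivation yields the product of two other Schur complements over the same pivot. Moreover,
`z j l` may be replaced by its own Schur complement, because each factor of the correction
`z j 0 * (z 0 0)⁻¹ * z 0 l` commutes with the Schur complement of `z i k`: for `z j 0` and `z 0 l`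
the powers of `q` cancel, and for `z 0 0` both products are a `2 × 2` quantum determinant.
-/

section Monoid

variable {M : Type*} [Monoid M]

/-- The elements `x` and `y` `q`-commute: moving `x` to the right past `y` costs a factor `q`.
The factor is taken to be a unit so that `q`-commutation relations can be inverted. -/
def QCommute (q : Mˣ) (x y : M) : Prop :=
  x * y = q * (y * x)

namespace QCommute

variable {q r : Mˣ} {x y w : M}

theorem one_iff_commute : QCommute 1 x y ↔ Commute x y := by
  rw [QCommute, Units.val_one, one_mul, commute_iff_eq]

theorem mul_right (hy : QCommute q x y) (hw : QCommute r x w) (hr : Commute (r : M) y) :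
    QCommute (q * r) x (y * w) :=
  calc x * (y * w) = q * (y * (x * w)) := by rw [← mul_assoc, hy]; simp only [mul_assoc]
    _ = q * ((y * r) * (w * x)) := by rw [hw]; simp only [mul_assoc]
    _ = (q * r : Mˣ) * (y * w * x) := by
      rw [← hr.eq, Units.val_mul]; simp only [mul_assoc]

theorem units_inv_right {a : Mˣ} (h : QCommute q x a) (hq : Commute (q : M) a) :
    QCommute q⁻¹ x (a⁻¹ : Mˣ) := by
  have hsemi : SemiconjBy x a (q * a : Mˣ) := by
    rw [SemiconjBy, Units.val_mul, mul_assoc, h]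
  have hinv : (q * a)⁻¹ = q⁻¹ * a⁻¹ := by
    rw [hq.units_of_val.eq, mul_inv_rev]
  rw [QCommute, hsemi.units_inv_right, hinv, Units.val_mul, mul_assoc]

end QCommute

end Monoid

section Ring

attribute [local instance] LieRing.ofAssociativeRing

variable {R : Type*} [Ring R]

theorem mul_lie_eq (x y w : R) : ⁅x * y, w⁆ = x * ⁅y, w⁆ + ⁅x, w⁆ * y := by
  simp only [Ring.lie_def]
  noncomm_ring

theorem units_inv_lie (a : Rˣ) (w : R) :
    ⁅((a⁻¹ : Rˣ) : R), w⁆ = -((a⁻¹ : Rˣ) * ⁅(a : R), w⁆ * (a⁻¹ : Rˣ)) := by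
  rw [Ring.lie_def, Ring.lie_def, mul_sub, sub_mul, Units.inv_mul_cancel_left, ← mul_assoc,
    Units.mul_inv_cancel_right, neg_sub]

/-- The Schur complement of the pivot `a` in the `2 × 2` block `(a b; c d)`, that is, the entry
which replaces `d` when `a` is used to clear the entry `c` below it. -/
def schurComplement (a : Rˣ) (b c d : R) : R :=
  d - c * (a⁻¹ : Rˣ) * b

theorem QCommute.commute_schurComplement {q r s a : Rˣ} {b c d x : R}
    (hq : ∀ y : R, Commute (q : R) y) (hr : ∀ y : R, Commute (r : R) y)
    (ha : QCommute q x a) (hb : QCommute r x b) (hc : QCommute s x c) (hd : Commute x d)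
    (hscale : s * q⁻¹ * r = 1) : Commute x (schurComplement a b c d) := by
  have hcab : QCommute (s * q⁻¹ * r) x (c * (a⁻¹ : Rˣ) * b) :=
    (hc.mul_right (ha.units_inv_right (hq a)) (hq c).units_inv_left).mul_right hb (hr _)
  rw [hscale, QCommute.one_iff_commute] at hcab
  exact hd.sub_right hcab

theorem schurComplement_lie {s w : R} (hs : ∀ y : R, Commute s y) {a : Rˣ} {b c d e f g h : R}
    (ha : ⁅(a : R), w⁆ = s * (c * g)) (hb : ⁅b, w⁆ = s * (c * h))
    (hd : ⁅d, w⁆ = s * (f * g)) (he : ⁅e, w⁆ = s * (f * h)) :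
    ⁅schurComplement a b d e, w⁆ =
      s * (schurComplement a c d f * schurComplement a b g h) := by
  have hs_left (x y : R) : x * (s * y) = s * (x * y) := (hs x).symm.left_comm y
  rw [schurComplement, sub_lie, mul_lie_eq, mul_lie_eq, units_inv_lie, ha, hb, hd, he]
  simp only [schurComplement, mul_sub, sub_mul, add_mul, mul_neg, neg_mul, mul_assoc, hs_left]
  abel

/-- The `2 × 2` block `(a b; c d)` satisfies the defining relations of `2 × 2` quantum matrices. -/
structure IsQuantumBlock (q : Rˣ) (a b c d : R) : Prop where
  row_top : QCommute q b a
  row_bot : QCommute q d c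
  col_left : QCommute q c a
  col_right : QCommute q d b
  antidiag : Commute b c
  diag : ⁅a, d⁆ = ((q⁻¹ : Rˣ) - q : R) * (b * c)

namespace IsQuantumBlock

variable {q a : Rˣ} {b c d : R}

theorem pivot_mul_schurComplement (h : IsQuantumBlock q a b c d) :
    a * schurComplement a b c d = a * d - (q⁻¹ : Rˣ) * (b * c) := by
  have hac : a * c = (q⁻¹ : Rˣ) * (c * a) := by
    rw [h.col_left, Units.inv_mul_cancel_left]
  rw [schurComplement, mul_sub, h.antidiag.eq, mul_assoc c, ← mul_assoc (a : R), hac]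
  simp only [mul_assoc, Units.mul_inv_cancel_left]

theorem schurComplement_mul_pivot (hq : ∀ x : R, Commute (q : R) x)
    (h : IsQuantumBlock q a b c d) :
    schurComplement a b c d * a = d * a - q * (b * c) := by
  rw [schurComplement, sub_mul, mul_assoc _ b, h.row_top, (hq _).symm.left_comm, mul_assoc c,
    Units.inv_mul_cancel_left, h.antidiag.eq]

theorem commute_schurComplement_pivot (hq : ∀ x : R, Commute (q : R) x)
    (h : IsQuantumBlock q a b c d) : Commute (schurComplement a b c d) a := by
  have had : a * d = ((q⁻¹ : Rˣ) - q : R) * (b * c) + d * a := sub_eq_iff_eq_add.mp h.diag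
  rw [commute_iff_eq, h.schurComplement_mul_pivot hq, h.pivot_mul_schurComplement, had, sub_mul]
  abel

end IsQuantumBlock

theorem row_reduced_main_diagonal_general {ι κ : Type*} [Preorder ι] [Preorder κ]
    {q : Rˣ} (hq : ∀ x : R, Commute (q : R) x) {z : ι → κ → R}
    (hz : ∀ ⦃i j : ι⦄, i < j → ∀ ⦃k l : κ⦄, k < l →
      IsQuantumBlock q (z i k) (z i l) (z j k) (z j l))
    {i₀ i j : ι} {k₀ k l : κ} {a : Rˣ} (ha : a = z i₀ k₀)
    (hi : i₀ < i) (hij : i < j) (hk : k₀ < k) (hkl : k < l) :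
    ⁅schurComplement a (z i₀ k) (z i k₀) (z i k), schurComplement a (z i₀ l) (z j k₀) (z j l)⁆ =
      ((q⁻¹ : Rˣ) - q : R) * (schurComplement a (z i₀ l) (z i k₀) (z i l) *
        schurComplement a (z i₀ k) (z j k₀) (z j k)) := by
  have hj := hi.trans hij
  have hl := hk.trans hkl
  set A := schurComplement a (z i₀ k) (z i k₀) (z i k)
  have hA_pivot : Commute A a :=
    IsQuantumBlock.commute_schurComplement_pivot hq (ha ▸ hz hi hk)
  have hA_row : Commute A (z i₀ l) :=
    (QCommute.commute_schurComplement hq hq (ha ▸ (hz hi hl).row_top) (hz hi hkl).row_top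
      (QCommute.one_iff_commute.mpr (hz hi hl).antidiag) (hz hi hkl).antidiag (by simp)).symm
  have hA_col : Commute A (z j k₀) :=
    (QCommute.commute_schurComplement hq (by simp) (ha ▸ (hz hj hk).col_left)
      (QCommute.one_iff_commute.mpr (hz hj hk).antidiag.symm) (hz hij hk).col_left
      (hz hij hk).antidiag.symm (by simp)).symm
  have hA_corr : ⁅A, z j k₀ * (a⁻¹ : Rˣ) * z i₀ l⁆ = 0 :=
    sub_eq_zero.mpr ((hA_col.mul_right hA_pivot.units_inv_right).mul_right hA_row).eq
  rw [schurComplement.eq_def a _ _ (z j l), lie_sub, hA_corr, sub_zero]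
  exact schurComplement_lie (fun y => (hq y).units_inv_left.sub_left (hq y))
    (ha ▸ (hz hj hl).diag) (hz hj hkl).diag (hz hij hl).diag (hz hij hkl).diag

end Ring

theorem IsQuantumMatrix.isQuantumBlock {D : Type*} [DivisionRing D] {q : D} {n : ℕ}
    {z : Matrix (Fin n) (Fin n) D} (hz : IsQuantumMatrix q z) (hq : q ≠ 0) ⦃i j : Fin n⦄
    (hij : i < j) ⦃k l : Fin n⦄ (hkl : k < l) :
    IsQuantumBlock (Units.mk0 q hq) (z i k) (z i l) (z j k) (z j l) := by
  obtain ⟨hrow, hcol, hantidiag, hdiag⟩ := hz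
  exact ⟨hrow i k l hkl, hrow j k l hkl, hcol i j k hij, hcol i j l hij,
    hantidiag i j k l hij hkl, hdiag i j k l hij hkl⟩

theorem row_reduced_main_diagonal {D : Type*} [DivisionRing D] (q : D)
    (hq : q ≠ 0) (hqc : ∀ x : D, q * x = x * q) (n : ℕ)
    (z : Matrix (Fin (n + 1)) (Fin (n + 1)) D) (hz : IsQuantumMatrix q z) (h11 : z 0 0 ≠ 0)
    (i j k l : Fin (n + 1)) (hi : 0 < i) (hij : i < j) (hk : 0 < k) (hkl : k < l) :
    rowReducedEntry z i k * rowReducedEntry z j l -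
        rowReducedEntry z j l * rowReducedEntry z i k =
      (q⁻¹ - q) * (rowReducedEntry z i l * rowReducedEntry z j k) :=
  row_reduced_main_diagonal_general (q := Units.mk0 q hq) hqc (hz.isQuantumBlock hq)
    (a := Units.mk0 (z 0 0) h11) rfl hi hij hk hkl
end
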